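/- Let Y be a k-dimensional E-vector space with k ≥ 1, let r ∈ {0,1,…,k−1}, and let A be an F-subspace of Y that is a cutting r-blocking set of Y. Then, for s = min{k−r−1, 𝓛(A)}, it holds that dim_F(A) ≥ (m−1)(r+s) + k. -/

import Mathlib

open Submodule Pointwise

/-- `S` is a cutting `r`-blocking set of `L`: for every submodule `V` of codimension `r`,
the span of `S ∩ V` is all of `V`. -/
def IsCuttingBlocking (R : Type*) {L : Type*} [DivisionRing R] [AddCommGroup L] [Module R L]
    (S : Set L) (r : ℕ) : Prop :=
  ∀ V : Submodule R L, Module.finrank R V = Module.finrank R L - r →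
    Submodule.span R (S ∩ (V : Set L)) = V

/-- The linearity index of `A ⊆ Y`: the largest `E`-dimension of an `E`-subspace
contained in `A`. -/
noncomputable def linIdx (E : Type*) {Y : Type*} [Field E] [AddCommGroup Y] [Module E Y]
    (A : Set Y) : ℕ :=
  sSup {d : ℕ | ∃ V : Submodule E Y, (V : Set Y) ⊆ A ∧ Module.finrank E V = d}

open Module

/-!
The core is a general position statement: an `F`-subspace `A` of `Y` admits an `E`-subspace `V` of
codimension `r` with `dim_F (A ∩ V) = max 0 (dim_F A - m * r)`. It is obtained by adding one vector
at a time, each chosen so that the line `E y` misses a given `F`-subspace of codimension at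
least `m`. For finite `F` such a `y` exists by counting; for infinite `F` one takes `y` for which
the operator `e ↦ e • y mod A` on `E` has maximal rank.

If `A` is a cutting `r`-blocking set and `r < k`, then `A ∩ V` spans `V ≠ 0` over `E`, so
`k - r ≤ dim_F A - m * r`. An `E`-subspace `W ⊆ A` improves this bound: the image of `A` in `Y ⧸ W`
is again a cutting `r`-blocking set, and `dim_F A = dim_F (A / W) + m * dim_E W`.
-/

section Dimension

variable {K M N : Type*} [DivisionRing K] [AddCommGroup M] [Module K M] [AddCommGroup N]
  [Module K N]

lemma exists_le_finrank_eq {A : Submodule K M} {n : ℕ} (hn : n ≤ finrank K A) :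
    ∃ B ≤ A, finrank K B = n := by
  obtain ⟨f, hf⟩ := exists_linearIndependent_of_le_finrank hn
  refine ⟨span K (Set.range (A.subtype ∘ f)), ?_, ?_⟩
  · exact span_le.2 (Set.range_subset_iff.2 fun i => (f i).2)
  · rw [finrank_span_eq_card (hf.map' _ A.ker_subtype), Fintype.card_fin]

lemma finrank_map_add_finrank_ker_of_ker_le {f : M →ₗ[K] N} {P : Submodule K M}
    [FiniteDimensional K P] (hP : LinearMap.ker f ≤ P) :
    finrank K (P.map f) + finrank K (LinearMap.ker f) = finrank K P := by
  rw [← (f.domRestrict P).finrank_range_add_finrank_ker, LinearMap.range_domRestrict,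
    LinearMap.ker_domRestrict, (comapSubtypeEquivOfLe hP).finrank_eq]

lemma finrank_span_le_finrank {F E Y : Type*} [DivisionRing F] [DivisionRing E] [Module F E]
    [AddCommGroup Y] [Module E Y] [Module F Y] [IsScalarTower F E Y] (C : Submodule F Y)
    [FiniteDimensional F C] : finrank E (span E (C : Set Y)) ≤ finrank F C := by
  have : FiniteDimensional F (span F (C : Set Y)) := by rwa [span_eq]
  obtain ⟨f, -, hf, -⟩ := exists_fun_fin_finrank_span_eq F (C : Set Y)
  calc finrank E (span E (C : Set Y)) = finrank E (span E (Set.range f)) := by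
        rw [← span_span_of_tower F E (Set.range f), hf, span_eq]
    _ ≤ Fintype.card (Fin (finrank F (span F (C : Set Y)))) := finrank_range_le_card f
    _ = finrank F C := by rw [Fintype.card_fin, span_eq]

lemma finrank_restrictScalars_eq_mul {F E Y : Type*} [Field F] [DivisionRing E] [Algebra F E]
    [AddCommGroup Y] [Module E Y] [Module F Y] [IsScalarTower F E Y] (V : Submodule E Y) :
    finrank F (V.restrictScalars F) = finrank F E * finrank E V :=
  (finrank_mul_finrank F E V).symm

end Dimension

section Perturbation

variable {F U Z : Type*} [Field F] [Infinite F] [AddCommGroup U] [Module F U]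
  [FiniteDimensional F U] [AddCommGroup Z] [Module F Z]

lemma exists_isUnit_one_add_smul (f : End F U) : ∃ t : F, t ≠ 0 ∧ IsUnit (1 + t • f) := by
  obtain ⟨μ, hμ⟩ := ((End.finite_spectrum f).insert 0).exists_notMem
  obtain ⟨hμ0, hμf⟩ := not_or.1 hμ
  refine ⟨-μ⁻¹, by simpa using hμ0, ?_⟩
  have hfactor : 1 + -μ⁻¹ • f = Units.mk0 μ⁻¹ (inv_ne_zero hμ0) • (algebraMap F _ μ - f) := by
    rw [Units.smul_mk0, smul_sub, Algebra.algebraMap_eq_smul_one, inv_smul_smul₀ hμ0, neg_smul,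
      sub_eq_add_neg]
  rw [hfactor]
  exact (spectrum.notMem_iff.1 hμf).smul _

lemma exists_injective_add_smul {S : U →ₗ[F] Z} (hS : Function.Injective S) (X : U →ₗ[F] Z) :
    ∃ t : F, t ≠ 0 ∧ Function.Injective (S + t • X) := by
  obtain ⟨p, hp⟩ := S.exists_leftInverse_of_injective (LinearMap.ker_eq_bot.2 hS)
  obtain ⟨t, ht, hunit⟩ := exists_isUnit_one_add_smul (p ∘ₗ X)
  refine ⟨t, ht, .of_comp (f := p) ?_⟩
  have hcomp : p ∘ₗ (S + t • X) = 1 + t • (p ∘ₗ X) := by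
    rw [LinearMap.comp_add, hp, LinearMap.comp_smul]; rfl
  rw [← LinearMap.coe_comp, hcomp]
  exact ((End.isUnit_iff _).1 hunit).injective

lemma exists_finrank_ker_add_smul_lt {T X : U →ₗ[F] Z} {x : U} (hx : T x = 0)
    (hX : X x ∉ LinearMap.range T) :
    ∃ t : F, finrank F (LinearMap.ker (T + t • X)) < finrank F (LinearMap.ker T) := by
  obtain ⟨C, hC⟩ := (LinearMap.ker T).exists_isCompl
  let S : C × F →ₗ[F] Z := (T.domRestrict C).coprod (LinearMap.toSpanSingleton F Z (X x))
  have hS : Function.Injective S := by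
    have hdisj : Disjoint (LinearMap.range (T.domRestrict C))
        (LinearMap.range (LinearMap.toSpanSingleton F Z (X x))) := by
      rw [LinearMap.range_toSpanSingleton, disjoint_span_singleton]
      rintro ⟨c, hc⟩
      exact absurd ⟨c, hc⟩ hX
    have hXx : X x ≠ 0 := fun h0 => hX (h0 ▸ zero_mem _)
    rw [← LinearMap.ker_eq_bot, LinearMap.ker_coprod_of_disjoint_range _ _ hdisj,
      LinearMap.ker_eq_bot.2 (LinearMap.injective_domRestrict_iff.2 hC.symm.disjoint),
      LinearMap.ker_eq_bot.2 (smul_left_injective F hXx), prod_bot]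
  obtain ⟨t, ht, hinj⟩ := exists_injective_add_smul hS ((X.domRestrict C).coprod 0)
  have hrange : LinearMap.range (S + t • (X.domRestrict C).coprod 0) ≤
      LinearMap.range (T + t • X) := by
    rintro _ ⟨⟨c, a⟩, rfl⟩
    refine ⟨c + (t⁻¹ * a) • x, ?_⟩
    have hcancel : t⁻¹ * a * t = a := by rw [mul_right_comm, inv_mul_cancel₀ ht, one_mul]
    simp only [S, hx, hcancel, LinearMap.add_apply, LinearMap.smul_apply, LinearMap.coprod_apply,
      LinearMap.domRestrict_apply, LinearMap.toSpanSingleton_apply, LinearMap.zero_apply, map_add,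
      map_smul, smul_add, smul_smul, smul_zero, add_zero]
    abel
  refine ⟨t, ?_⟩
  have hle := Submodule.finrank_mono hrange
  rw [LinearMap.finrank_range_of_inj hinj, finrank_prod, finrank_self] at hle
  have := finrank_add_eq_of_isCompl hC
  have := (T + t • X).finrank_range_add_finrank_ker
  omega

/-- Amitsur's lemma: a member of maximal rank works, since otherwise adding some multiple of `X`
to it would increase the rank. -/
lemma exists_mem_forall_map_ker_le_range (L : Submodule F (U →ₗ[F] Z)) :
    ∃ T ∈ L, ∀ X ∈ L, (LinearMap.ker T).map X ≤ LinearMap.range T := by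
  obtain ⟨T, hT, hmin⟩ := exists_minimalFor_of_wellFoundedLT (· ∈ L)
    (fun T => finrank F (LinearMap.ker T)) ⟨0, L.zero_mem⟩
  refine ⟨T, hT, fun X hX => Submodule.map_le_iff_le_comap.2 fun x hx => ?_⟩
  by_contra hXx
  obtain ⟨t, ht⟩ := exists_finrank_ker_add_smul_lt hx hXx
  exact ht.not_ge (hmin (L.add_mem hT (L.smul_mem t hX)) ht.le)

end Perturbation

section GenericPosition

variable {F E Y : Type*} [Field F] [DivisionRing E] [Algebra F E]
  [AddCommGroup Y] [Module E Y] [Module F Y]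

lemma exists_forall_smul_mem_imp_eq_zero_of_finite [Finite F] [FiniteDimensional F E]
    [FiniteDimensional F Y] {A : Submodule F Y} (hA : finrank F E ≤ finrank F (Y ⧸ A)) :
    ∃ y : Y, ∀ e : E, e • y ∈ A → e = 0 := by
  have : Finite E := finite_of_finite F
  have : Finite Y := finite_of_finite F
  let act : E × A → Y := fun p => p.1 • (p.2 : Y)
  have hcard : Nat.card (E × A) ≤ Nat.card Y := by
    rw [Nat.card_prod, A.card_eq_card_quotient_mul_card, mul_comm,
      natCard_eq_pow_finrank (K := F) (V := E), natCard_eq_pow_finrank (K := F) (V := Y ⧸ A)]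
    exact Nat.mul_le_mul_left _ (Nat.pow_le_pow_right Nat.card_pos hA)
  have hnot_inj : ¬ Function.Injective act := fun hinj =>
    one_ne_zero (congrArg Prod.fst (@hinj (1, 0) (0, 0) (by simp [act])))
  have hnot_surj : ¬ Function.Surjective act := fun hsurj =>
    hnot_inj (hsurj.bijective_of_nat_card_le hcard).injective
  obtain ⟨y, hy⟩ := not_forall.1 hnot_surj
  exact ⟨y, fun e he => by_contra fun he0 => hy ⟨(e⁻¹, ⟨_, he⟩), inv_smul_smul₀ he0 y⟩⟩

variable [IsScalarTower F E Y]

lemma exists_forall_smul_mem_imp_eq_zero_of_infinite [Infinite F] [FiniteDimensional F E]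
    {A : Submodule F Y} (hA : finrank F E ≤ finrank F (Y ⧸ A)) :
    ∃ y : Y, ∀ e : E, e • y ∈ A → e = 0 := by
  let Φ : Y →ₗ[F] E →ₗ[F] Y ⧸ A := (Algebra.lsmul F F Y).toLinearMap.flip.compr₂ A.mkQ
  obtain ⟨_, ⟨y, rfl⟩, hy⟩ := exists_mem_forall_map_ker_le_range (LinearMap.range Φ)
  have hΦ_eq_zero_iff (e : E) : Φ y e = 0 ↔ e • y ∈ A := Submodule.Quotient.mk_eq_zero A
  refine ⟨y, fun e he => by_contra fun he0 => he0 ?_⟩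
  have hrange : LinearMap.range (Φ y) = ⊤ := by
    refine eq_top_iff.2 fun z _ => ?_
    obtain ⟨w, rfl⟩ := A.mkQ_surjective z
    have hw : Φ (e⁻¹ • w) e = A.mkQ w := congrArg A.mkQ (smul_inv_smul₀ he0 w)
    exact hw ▸ hy _ ⟨_, rfl⟩ (mem_map_of_mem ((hΦ_eq_zero_iff e).2 he))
  have hrank := (Φ y).finrank_range_add_finrank_ker
  rw [hrange, finrank_top] at hrank
  have hker : LinearMap.ker (Φ y) = ⊥ := finrank_eq_zero.1 (by omega)
  exact LinearMap.ker_eq_bot'.1 hker e ((hΦ_eq_zero_iff e).2 he)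

lemma exists_forall_smul_mem_imp_eq_zero [FiniteDimensional F E] [FiniteDimensional F Y]
    {A : Submodule F Y} (hA : finrank F E ≤ finrank F (Y ⧸ A)) :
    ∃ y : Y, ∀ e : E, e • y ∈ A → e = 0 := by
  cases finite_or_infinite F
  · exact exists_forall_smul_mem_imp_eq_zero_of_finite hA
  · exact exists_forall_smul_mem_imp_eq_zero_of_infinite hA

variable [FiniteDimensional F E] [FiniteDimensional E Y]

lemma exists_finrank_eq_and_disjoint {A : Submodule F Y} {n : ℕ}
    (hA : finrank F A + finrank F E * n ≤ finrank F Y) :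
    ∃ V : Submodule E Y, finrank E V = n ∧ Disjoint A (V.restrictScalars F) := by
  have : FiniteDimensional F Y := Module.Finite.trans E Y
  induction n with
  | zero => exact ⟨⊥, finrank_bot E Y, disjoint_bot_right⟩
  | succ n ih =>
    obtain ⟨V, hVn, hAV⟩ := ih (by rw [mul_add_one] at hA; omega)
    have hcodim : finrank F E ≤ finrank F (Y ⧸ (A ⊔ V.restrictScalars F)) := by
      have hsup := finrank_add_le_finrank_add_finrank A (V.restrictScalars F)
      rw [finrank_restrictScalars_eq_mul, hVn] at hsup
      have := finrank_quotient_add_finrank (A ⊔ V.restrictScalars F)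
      rw [mul_add_one] at hA
      omega
    obtain ⟨y, hy⟩ := exists_forall_smul_mem_imp_eq_zero (E := E) hcodim
    have hyV : y ∉ V := fun hmem =>
      one_ne_zero (hy 1 (mem_sup_right (by rwa [one_smul])))
    refine ⟨V ⊔ span E {y}, by rw [finrank_sup_span_singleton hyV, hVn], ?_⟩
    rw [restrictScalars_sup]
    refine hAV.disjoint_sup_right_of_disjoint_sup_left (disjoint_def.2 fun z hz hzy => ?_)
    obtain ⟨e, rfl⟩ := mem_span_singleton.1 hzy
    rw [hy e hz, zero_smul]

/-- The subtraction is meant to truncate: `V` can be chosen disjoint from `A` as soon as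
`finrank F A ≤ finrank F E * r`. -/
lemma exists_finrank_inf_eq_sub (A : Submodule F Y) {r : ℕ} (hr : r ≤ finrank E Y) :
    ∃ V : Submodule E Y, finrank E V = finrank E Y - r ∧
      finrank F ↥(A ⊓ V.restrictScalars F) = finrank F A - finrank F E * r := by
  have : FiniteDimensional F Y := Module.Finite.trans E Y
  have hY : finrank F E * r + finrank F E * (finrank E Y - r) = finrank F Y := by
    rw [← mul_add, Nat.add_sub_cancel' hr, finrank_mul_finrank]
  rcases le_total (finrank F E * r) (finrank F A) with hle | hge
  · obtain ⟨B, hBA, hB⟩ := exists_le_finrank_eq hle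
    obtain ⟨V, hV, hBV⟩ := exists_finrank_eq_and_disjoint (E := E) (hB ▸ hY.le)
    refine ⟨V, hV, ?_⟩
    have htop : B ⊔ V.restrictScalars F = ⊤ := eq_top_of_disjoint _ _
      (by rw [hB, finrank_restrictScalars_eq_mul, hV, hY]) hBV
    have hsup : B ⊔ A ⊓ V.restrictScalars F = A := by
      rw [inf_comm, ← sup_inf_assoc_of_le _ hBA, htop, top_inf_eq]
    have hdim := finrank_sup_add_finrank_inf_eq B (A ⊓ V.restrictScalars F)
    rw [hsup, (hBV.mono_right inf_le_right).eq_bot, finrank_bot, hB] at hdim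
    omega
  · obtain ⟨V, hV, hAV⟩ := exists_finrank_eq_and_disjoint (E := E)
      ((Nat.add_le_add_right hge _).trans hY.le)
    exact ⟨V, hV, by rw [hAV.eq_bot, finrank_bot, Nat.sub_eq_zero_of_le hge]⟩

end GenericPosition

namespace IsCuttingBlocking

lemma image_of_surjective {R L M : Type*} [DivisionRing R] [AddCommGroup L] [Module R L]
    [FiniteDimensional R L] [AddCommGroup M] [Module R M] {S : Set L} {r : ℕ}
    (hS : IsCuttingBlocking R S r) {f : L →ₗ[R] M} (hf : Function.Surjective f)
    (hr : r ≤ finrank R M) : IsCuttingBlocking R (f '' S) r := by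
  intro V hV
  have hVcomap : (V.comap f).map f = V := map_comap_eq_of_surjective hf V
  have hcomap : finrank R (V.comap f) = finrank R L - r := by
    have hdimV := finrank_map_add_finrank_ker_of_ker_le (f.ker_le_comap (p := V))
    rw [hVcomap] at hdimV
    have hdimL := f.finrank_range_add_finrank_ker
    rw [LinearMap.range_eq_top.2 hf, finrank_top] at hdimL
    omega
  calc span R (f '' S ∩ V) = (span R (S ∩ V.comap f)).map f := by
        rw [map_span, comap_coe, Set.image_inter_preimage]
    _ = V := by rw [hS _ hcomap, hVcomap]

variable {F E Y : Type*} [Field F] [DivisionRing E] [Algebra F E] [FiniteDimensional F E]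
  [AddCommGroup Y] [Module E Y] [Module F Y] [IsScalarTower F E Y] [FiniteDimensional E Y]
  {A : Submodule F Y} {r : ℕ}

lemma mul_add_finrank_sub_le_finrank (hA : IsCuttingBlocking E (A : Set Y) r)
    (hr : r < finrank E Y) :
    finrank F E * r + (finrank E Y - r) ≤ finrank F A := by
  have : FiniteDimensional F Y := Module.Finite.trans E Y
  obtain ⟨V, hV, hAV⟩ := exists_finrank_inf_eq_sub A hr.le
  have hspan : finrank E V ≤ finrank F ↥(A ⊓ V.restrictScalars F) := by
    have := finrank_span_le_finrank (E := E) (A ⊓ V.restrictScalars F)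
    rwa [coe_inf, coe_restrictScalars, hA V hV] at this
  omega

end IsCuttingBlocking

lemma exists_subset_finrank_eq_of_le_linIdx {E Y : Type*} [Field E] [AddCommGroup Y] [Module E Y]
    [FiniteDimensional E Y] {A : Set Y} (h0 : (0 : Y) ∈ A) {s : ℕ} (hs : s ≤ linIdx E A) :
    ∃ W : Submodule E Y, (W : Set Y) ⊆ A ∧ finrank E W = s := by
  obtain ⟨V, hVA, hV⟩ : linIdx E A ∈
      {d : ℕ | ∃ V : Submodule E Y, (V : Set Y) ⊆ A ∧ finrank E V = d} := by
    refine Nat.sSup_mem ⟨0, ⊥, by simpa using h0, finrank_bot E Y⟩ ⟨finrank E Y, ?_⟩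
    rintro _ ⟨V, -, rfl⟩
    exact V.finrank_le
  obtain ⟨W, hWV, hW⟩ := exists_le_finrank_eq (hs.trans_eq hV.symm)
  exact ⟨W, (SetLike.coe_subset_coe.2 hWV).trans hVA, hW⟩

theorem statement11_general {F E Y : Type*} [Field F] [DivisionRing E] [Algebra F E]
    [FiniteDimensional F E] [AddCommGroup Y] [Module E Y] [Module F Y] [IsScalarTower F E Y]
    [FiniteDimensional E Y] {A : Submodule F Y} {r : ℕ}
    (hA : IsCuttingBlocking E (A : Set Y) r) {W : Submodule E Y} (hWA : (W : Set Y) ⊆ A)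
    (hr : r + finrank E W < finrank E Y) :
    (finrank F E - 1) * (r + finrank E W) + finrank E Y ≤ finrank F A := by
  have : FiniteDimensional F Y := Module.Finite.trans E Y
  let π : Y →ₗ[F] Y ⧸ W := W.mkQ.restrictScalars F
  have hker : LinearMap.ker π = W.restrictScalars F := by
    rw [LinearMap.ker_restrictScalars, ker_mkQ]
  have hquot : finrank E (Y ⧸ W) + finrank E W = finrank E Y := W.finrank_quotient_add_finrank
  have hdimA : finrank F (A.map π) + finrank F E * finrank E W = finrank F A := by
    rw [← finrank_restrictScalars_eq_mul, ← hker,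
      finrank_map_add_finrank_ker_of_ker_le (hker.trans_le hWA)]
  have hcut : IsCuttingBlocking E (A.map π : Set (Y ⧸ W)) r :=
    hA.image_of_surjective W.mkQ_surjective (by omega)
  have hbound := hcut.mul_add_finrank_sub_le_finrank (by omega)
  have hcodim : finrank E (Y ⧸ W) - r + r + finrank E W = finrank E Y := by omega
  obtain ⟨n, hn⟩ : ∃ n, finrank F E = n + 1 := Nat.exists_eq_add_one.2 finrank_pos
  rw [hn] at hdimA hbound ⊢
  rw [Nat.add_sub_cancel]
  linarith

/-- Corollary 4.2 (3): if `A` is an `F`-subspace of a `k`-dimensional `E`-vector space `Y`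
which is a cutting `r`-blocking set (`r ∈ {0, …, k-1}`), then for
`s = min{k-r-1, 𝓛(A)}` one has `dim_F A ≥ (m-1)(r+s) + k`. -/
theorem statement11 (F E : Type*) [Field F] [Field E] [Algebra F E]
    [FiniteDimensional F E] (m : ℕ) (hm : Module.finrank F E = m)
    (Y : Type*) [AddCommGroup Y] [Module E Y] [Module F Y] [IsScalarTower F E Y]
    [FiniteDimensional E Y] (k : ℕ) (hY : Module.finrank E Y = k)
    (r : ℕ) (hr : r + 1 ≤ k)
    (A : Submodule F Y) (hA : IsCuttingBlocking E (A : Set Y) r)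
    (s : ℕ) (hs : s = min (k - r - 1) (linIdx E (A : Set Y))) :
    (m - 1) * (r + s) + k ≤ Module.finrank F A := by
  obtain ⟨W, hWA, rfl⟩ := exists_subset_finrank_eq_of_le_linIdx A.zero_mem
    (hs.trans_le (min_le_right _ _))
  subst hm hY
  exact statement11_general hA hWA (by omega)
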